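/- arXiv:2203.10955 — 10 statements merged into one kernel-verified Lean document; each statement's English description precedes it below -/
import Mathlib

section
/- The number x = 2·sin(π/96) satisfies the equation 2·T_{45}(x/2) = 2·cos(π/32); equivalently, T_{45}(sin(π/96)) = cos(π/32). (This is the solution of the first example of Adrianus Romanus.) -/
open Real Polynomial

theorem romanus_first_example :
    2 * (Polynomial.Chebyshev.T ℝ 45).eval (2 * Real.sin (π / 96) / 2) = 2 * Real.cos (π / 32) ∧
    (Polynomial.Chebyshev.T ℝ 45).eval (Real.sin (π / 96)) = Real.cos (π / 32) := by
  have key : (Polynomial.Chebyshev.T ℝ 45).eval (Real.sin (π / 96)) = Real.cos (π / 32) := by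
    -- `sin (π / 96) = cos (47π / 96)`, and `45 * 47π / 96` is `π / 32` plus 11 full turns.
    rw [← Real.cos_pi_div_two_sub, Polynomial.Chebyshev.T_real_cos,
      ← Real.cos_add_nat_mul_two_pi (π / 32) 11]
    congr 1
    push_cast
    ring
  refine ⟨?_, key⟩
  rw [mul_div_cancel_left₀ _ (two_ne_zero' ℝ), key]
end

section
/- 2·cos(π/30) = √(3/16) + √(15/16) + √(5/8 − √(5/64)). -/
/-!
Since `π / 30 = π / 5 - π / 6`, the subtraction formula gives
`2 cos (π / 30) = √3 cos (π / 5) + sin (π / 5)`. With `cos (π / 5) = (1 + √5) / 4`, the first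
summand is `√3 / 4 + √15 / 4`, and `sin (π / 5) ^ 2 = 1 - cos (π / 5) ^ 2 = 5 / 8 - √5 / 8`.
-/

open Real

theorem two_cos_pi_div_30 :
    2 * Real.cos (π / 30) =
      Real.sqrt (3 / 16) + Real.sqrt (15 / 16) + Real.sqrt (5 / 8 - Real.sqrt (5 / 64)) := by
  have h5 : √5 ^ 2 = (5 : ℝ) := Real.sq_sqrt (by norm_num)
  have h3 : √3 ^ 2 = (3 : ℝ) := Real.sq_sqrt (by norm_num)
  have e1 : √(3 / 16 : ℝ) = √3 / 4 := by
    rw [Real.sqrt_eq_iff_mul_self_eq (by norm_num) (by positivity)]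
    linear_combination -h3 / 16
  have e2 : √(15 / 16 : ℝ) = √3 * √5 / 4 := by
    rw [Real.sqrt_eq_iff_mul_self_eq (by norm_num) (by positivity)]
    linear_combination -√5 ^ 2 * h3 / 16 - 3 * h5 / 16
  have e3 : √(5 / 64 : ℝ) = √5 / 8 := by
    rw [Real.sqrt_eq_iff_mul_self_eq (by norm_num) (by positivity)]
    linear_combination -h5 / 64
  have e4 : √(5 / 8 - √5 / 8) = sin (π / 5) := by
    have hs : 0 ≤ sin (π / 5) :=
      Real.sin_nonneg_of_nonneg_of_le_pi (by positivity) (by linarith [Real.pi_pos])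
    have hsq : 5 / 8 - √5 / 8 = sin (π / 5) ^ 2 := by
      rw [Real.sin_sq, Real.cos_pi_div_five]
      linear_combination h5 / 16
    rw [hsq, Real.sqrt_sq hs]
  have hangle : π / 30 = π / 5 - π / 6 := by ring
  rw [e1, e2, e3, e4, hangle, Real.cos_sub, Real.cos_pi_div_five, Real.cos_pi_div_six,
    Real.sin_pi_div_six]
  ring
end

section
/- 2·sin(π/120) = √(2 − √(2 + √(3/16) + √(15/16) + √(5/8 − √(5/64)))). -/
/-!
Since `π / 30 = π / 5 - π / 6`, the subtraction formula together with `cos (π / 5) = (1 + √5) / 4`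
gives `2 * cos (π / 30) = √(3/16) + √(15/16) + √(5/8 - √(5/64))`, the last summand being
`sin (π / 5)`. Two half-angle formulas, `2 cos (x/2) = √(2 + 2 cos x)` and
`2 sin (x/2) = √(2 - 2 cos x)`, then lead from `π / 30` to `π / 60` and to `π / 120`.
-/

open Real

theorem sin_pi_div_five_eq : Real.sin (π / 5) = √(5 / 8 - √(5 / 64)) := by
  have hpos : 0 ≤ Real.sin (π / 5) :=
    sin_nonneg_of_nonneg_of_le_pi (by positivity) (by linarith [pi_pos])
  have h5 : √5 ^ 2 = (5 : ℝ) := sq_sqrt (by norm_num)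
  have h64 : √(5 / 64 : ℝ) = √5 / 8 := by
    rw [show (5 / 64 : ℝ) = (√5 / 8) ^ 2 by linarith]
    exact sqrt_sq (by positivity)
  have hs := Real.sin_sq_add_cos_sq (π / 5)
  rw [cos_pi_div_five] at hs
  rw [h64, show 5 / 8 - √5 / 8 = Real.sin (π / 5) ^ 2 by linarith, sqrt_sq hpos]

theorem two_cos_pi_div_thirty :
    2 * Real.cos (π / 30) = √(3 / 16) + √(15 / 16) + √(5 / 8 - √(5 / 64)) := by
  have h16 : √(16 : ℝ) = 4 := by
    rw [show (16 : ℝ) = 4 ^ 2 by norm_num]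
    exact sqrt_sq (by norm_num)
  have h15 : √(15 : ℝ) = √3 * √5 := by
    rw [← sqrt_mul (by norm_num)]
    norm_num
  rw [show π / 30 = π / 5 - π / 6 by ring, Real.cos_sub, cos_pi_div_five, cos_pi_div_six,
    sin_pi_div_six, sin_pi_div_five_eq, sqrt_div (by norm_num) 16, sqrt_div (by norm_num) 16,
    h16, h15]
  ring

theorem two_sin_pi_div_120 :
    2 * Real.sin (π / 120) =
      Real.sqrt (2 - Real.sqrt (2 + Real.sqrt (3 / 16) + Real.sqrt (15 / 16)
        + Real.sqrt (5 / 8 - Real.sqrt (5 / 64)))) := by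
  have hcos : 0 ≤ Real.cos (π / 60) :=
    cos_nonneg_of_neg_pi_div_two_le_of_le (by linarith [pi_pos]) (by linarith [pi_pos])
  have hsin : 0 ≤ Real.sin (π / 120) :=
    sin_nonneg_of_nonneg_of_le_pi (by positivity) (by linarith [pi_pos])
  have h60 : 2 + √(3 / 16) + √(15 / 16) + √(5 / 8 - √(5 / 64)) = (2 * Real.cos (π / 60)) ^ 2 := by
    have h := Real.cos_two_mul (π / 60)
    rw [show 2 * (π / 60) = π / 30 by ring] at h
    linarith [two_cos_pi_div_thirty]
  have h120 : 2 - 2 * Real.cos (π / 60) = (2 * Real.sin (π / 120)) ^ 2 := by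
    have h := Real.cos_two_mul (π / 120)
    rw [show 2 * (π / 120) = π / 60 by ring] at h
    linarith [Real.sin_sq_add_cos_sq (π / 120)]
  rw [h60, sqrt_sq (by positivity), h120, sqrt_sq (by positivity)]
end

section
/- √(7/4 − √(5/16) − √(15/8 − √(45/64))) = 2·sin(π/15). (This identifies the right-hand side b in the actual problem posed by Adrianus Romanus.) -/
/-!
Since `2π/15 = π/3 - π/5`, the half-angle formula gives
`(2 sin (π/15))² = 2 - 2 cos (2π/15) = 2 - cos (π/5) - √3 sin (π/5)`.
Substituting `cos (π/5) = (1 + √5)/4` yields `2 - cos (π/5) = 7/4 - √(5/16)` and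
`(√3 sin (π/5))² = 3 (1 - cos² (π/5)) = 15/8 - √(45/64)`.
As `√3 sin (π/5)` and `2 sin (π/15)` are nonnegative, they are the square roots in question.
-/

open Real

theorem romanus_b_value :
    Real.sqrt (7 / 4 - Real.sqrt (5 / 16) - Real.sqrt (15 / 8 - Real.sqrt (45 / 64))) =
      2 * Real.sin (π / 15) := by
  have h5 : √5 ^ 2 = (5 : ℝ) := Real.sq_sqrt (by norm_num)
  have h3 : √3 ^ 2 = (3 : ℝ) := Real.sq_sqrt (by norm_num)
  have hs0 : 0 ≤ sin (π / 5) :=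
    sin_nonneg_of_nonneg_of_le_pi (by positivity) (by linarith [pi_pos])
  have ht0 : 0 ≤ sin (π / 15) :=
    sin_nonneg_of_nonneg_of_le_pi (by positivity) (by linarith [pi_pos])
  have hc := cos_pi_div_five
  have hs : sin (π / 5) ^ 2 = (5 - √5) / 8 := by
    rw [sin_sq, hc]
    linear_combination (-1 / 16) * h5
  have e1 : √(5 / 16) = √5 / 4 := by
    rw [Real.sqrt_eq_iff_mul_self_eq (by positivity) (by positivity)]
    linear_combination (-1 / 16) * h5
  have e2 : √(45 / 64) = 3 * √5 / 8 := by
    rw [Real.sqrt_eq_iff_mul_self_eq (by positivity) (by positivity)]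
    linear_combination (-9 / 64) * h5
  have e3 : √(15 / 8 - 3 * √5 / 8) = √3 * sin (π / 5) := by
    rw [show 15 / 8 - 3 * √5 / 8 = (√3 * sin (π / 5)) ^ 2 by
      rw [mul_pow, h3, hs]; ring]
    exact Real.sqrt_sq (by positivity)
  have hd : cos (2 * (π / 15)) = 1 / 2 * cos (π / 5) + √3 / 2 * sin (π / 5) := by
    rw [show 2 * (π / 15) = π / 3 - π / 5 by ring, cos_sub, cos_pi_div_three, sin_pi_div_three]
  have hh : cos (2 * (π / 15)) = 1 - 2 * sin (π / 15) ^ 2 := by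
    rw [cos_two_mul, cos_sq']; ring
  rw [e1, e2, e3, show 7 / 4 - √5 / 4 - √3 * sin (π / 5) = (2 * sin (π / 15)) ^ 2 by
    linear_combination hc + 2 * hd - 2 * hh]
  exact Real.sqrt_sq (by positivity)
end

section
/- The set of real solutions of the equation T_{45}(x) = sin(π/15) is exactly { sin(π/675 + 2πk/45) : k ∈ ℤ }. -/
open Real Polynomial

/-!
Since `45 ≡ 1 (mod 4)`, the Chebyshev identity at `cos (π / 2 - θ)` gives
`T₄₅ (sin θ) = sin (45 θ)`. As `|T₄₅ x| ≤ 1` forces `|x| ≤ 1`, every solution is `x = sin θ` with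
`sin (45 θ) = sin (π / 15)`. Of the two resulting families of angles, the second is the
reflection `θ ↦ π - θ` of the first, so it gives the same values of `sin`.
-/

lemma eval_T_sin (θ : ℝ) : (Polynomial.Chebyshev.T ℝ 45).eval (sin θ) = sin (45 * θ) := by
  rw [← cos_pi_div_two_sub, Polynomial.Chebyshev.T_real_cos, ← cos_pi_div_two_sub,
    ← cos_add_int_mul_two_pi (π / 2 - 45 * θ) 11]
  congr 1
  push_cast
  ring

theorem romanus_solution_set :
    {x : ℝ | (Polynomial.Chebyshev.T ℝ 45).eval x = Real.sin (π / 15)} =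
      {x : ℝ | ∃ k : ℤ, x = Real.sin (π / 675 + 2 * π * k / 45)} := by
  ext x
  simp only [Set.mem_ofPred_eq]
  constructor
  · intro h
    have hx : |x| ≤ 1 := by
      rw [Polynomial.Chebyshev.abs_eval_T_real_le_one_iff (n := 45) (by norm_num), h]
      exact abs_sin_le_one _
    obtain ⟨hx₁, hx₂⟩ := abs_le.mp hx
    obtain ⟨θ, rfl⟩ : ∃ θ, sin θ = x := ⟨arcsin x, sin_arcsin hx₁ hx₂⟩
    rw [eval_T_sin, sin_eq_sin_iff] at h
    obtain ⟨k, hk | hk⟩ := h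
    · refine ⟨-k, ?_⟩
      congr 1
      push_cast
      linarith
    -- `45 (π - θ) = π / 15 + 2 π (22 - k)` when `45 θ = π - π / 15 + 2 π k`
    · refine ⟨22 - k, ?_⟩
      rw [← sin_pi_sub]
      congr 1
      push_cast
      linarith
  · rintro ⟨k, rfl⟩
    rw [eval_T_sin, ← sin_add_int_mul_two_pi (π / 15) k]
    congr 1
    ring
end

section
/- The number sin(π/675) is the smallest positive real solution of the equation T_{45}(x) = sin(π/15): it satisfies the equation, and every positive real x with T_{45}(x) = sin(π/15) satisfies x ≥ sin(π/675). -/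
/-!
Since `45 ≡ 1 (mod 4)`, substituting `θ = π/2 - φ` in `T₄₅(cos θ) = cos (45 θ)` gives
`T₄₅(sin φ) = sin (45 φ)`. At `φ = π/675` this is the equation. A positive `x < sin (π/675)` is
`sin φ` with `0 < φ < π/675`, and then `sin (45 φ) < sin (π/15)` by monotonicity of the sine on
`[-π/2, π/2]`, so `x` is not a solution.
-/

open Real Polynomial

theorem eval_T_forty_five_sin (φ : ℝ) :
    (Polynomial.Chebyshev.T ℝ 45).eval (Real.sin φ) = Real.sin (45 * φ) := by
  rw [← Real.cos_pi_div_two_sub φ, Polynomial.Chebyshev.T_real_cos,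
    ← Real.cos_pi_div_two_sub (45 * φ), ← Real.cos_add_nat_mul_two_pi (π / 2 - 45 * φ) 11]
  congr 1
  push_cast
  ring

theorem romanus_smallest_positive_solution :
    (Polynomial.Chebyshev.T ℝ 45).eval (Real.sin (π / 675)) = Real.sin (π / 15) ∧
    ∀ x : ℝ, 0 < x → (Polynomial.Chebyshev.T ℝ 45).eval x = Real.sin (π / 15) →
      Real.sin (π / 675) ≤ x := by
  have hpi := Real.pi_pos
  refine ⟨?_, fun x hx h => ?_⟩
  · rw [eval_T_forty_five_sin]
    congr 1
    ring
  · by_contra! hlt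
    have hx1 : x ≤ 1 := hlt.le.trans (Real.sin_le_one _)
    have hpos : 0 < Real.arcsin x := Real.arcsin_pos.2 hx
    have hsmall : Real.arcsin x < π / 675 :=
      (Real.arcsin_lt_iff_lt_sin' ⟨by linarith, by linarith⟩).2 hlt
    rw [← Real.sin_arcsin (by linarith) hx1, eval_T_forty_five_sin] at h
    exact (Real.sin_lt_sin_of_lt_of_le_pi_div_two (by linarith) (by linarith)
      (by linarith)).ne h
end

section
/- The second example of Adrianus Romanus is erroneous: 2·T_{45}(sin(π/192)) ≠ √(2 + √(2 − √(2 − √(2 − √(2 − √2))))). -/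
open Real Polynomial

/-!
Since `sin x = cos (π/2 - x)` and `45 ≡ 1 mod 4`, one has `T₄₅ (sin x) = sin (45 x)`. At `x = π/192`
this is `sin (15π/64) < sin (π/4) = √2/2`, so the left-hand side is less than `√2`, while the nested
radical on the right is at least `√2`.
-/

theorem romanus_second_example_error :
    2 * (Polynomial.Chebyshev.T ℝ 45).eval (Real.sin (π / 192)) ≠
      Real.sqrt (2 + Real.sqrt (2 - Real.sqrt (2 - Real.sqrt (2 - Real.sqrt (2 - Real.sqrt 2))))) := by
  have hT : (Polynomial.Chebyshev.T ℝ 45).eval (Real.sin (π / 192)) = Real.sin (15 * π / 64) := by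
    rw [← Real.cos_pi_div_two_sub, Polynomial.Chebyshev.T_real_cos, ← Real.cos_pi_div_two_sub,
      ← Real.cos_add_nat_mul_two_pi (π / 2 - 15 * π / 64) 11]
    congr 1
    push_cast
    ring
  have hlt : Real.sin (15 * π / 64) < Real.sin (π / 4) :=
    Real.sin_lt_sin_of_lt_of_le_pi_div_two (by linarith [Real.pi_pos]) (by linarith [Real.pi_pos])
      (by linarith [Real.pi_pos])
  rw [Real.sin_pi_div_four] at hlt
  rw [hT]
  refine ne_of_lt (lt_of_lt_of_le (by linarith : _ < Real.sqrt 2) ?_)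
  exact Real.sqrt_le_sqrt (le_add_of_nonneg_right (Real.sqrt_nonneg _))
end

section
/- T_{45}(sin(π/192)) = sin(15π/64), and 2·sin(15π/64) = √(2 − √(2 − √(2 + √(2 + √2)))); hence x = 2·sin(π/192) solves 2·T_{45}(x/2) = √(2 − √(2 − √(2 + √(2 + √2)))), which is the corrected value of b for Romanus' second example. -/
/-!
Since `sin a = cos (π/2 - a)`, `T₄₅ (sin a) = cos (45π/2 - 45a) = sin (45a)` because `45 ≡ 1 mod 4`;
take `a = π/192`. The half-angle formula `2 sin x = √(2 - 2 cos 2x)` at `x = 15π/64`, together with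
`cos (15π/32) = sin (π/32)` and Mathlib's radical expression for `sin (π/32)`, gives the nested root.
-/

open Real Polynomial

theorem romanus_second_example_corrected :
    (Polynomial.Chebyshev.T ℝ 45).eval (Real.sin (π / 192)) = Real.sin (15 * π / 64) ∧
    2 * Real.sin (15 * π / 64) =
      Real.sqrt (2 - Real.sqrt (2 - Real.sqrt (2 + Real.sqrt (2 + Real.sqrt 2)))) ∧
    2 * (Polynomial.Chebyshev.T ℝ 45).eval (2 * Real.sin (π / 192) / 2) =
      Real.sqrt (2 - Real.sqrt (2 - Real.sqrt (2 + Real.sqrt (2 + Real.sqrt 2)))) := by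
  have h1 : (Polynomial.Chebyshev.T ℝ 45).eval (Real.sin (π / 192)) =
      Real.sin (15 * π / 64) := by
    rw [← Real.cos_pi_div_two_sub (π / 192), Polynomial.Chebyshev.T_real_cos,
      ← Real.cos_pi_div_two_sub (15 * π / 64),
      ← Real.cos_add_nat_mul_two_pi (π / 2 - 15 * π / 64) 11]
    congr 1
    push_cast
    ring
  have h2 : 2 * Real.sin (15 * π / 64) =
      Real.sqrt (2 - Real.sqrt (2 - Real.sqrt (2 + Real.sqrt (2 + Real.sqrt 2)))) := by
    have hpos : 0 ≤ Real.sin (15 * π / 64) :=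
      Real.sin_nonneg_of_nonneg_of_le_pi (by positivity) (by linarith [Real.pi_pos])
    have hcos : 2 * Real.cos (2 * (15 * π / 64)) =
        Real.sqrt (2 - Real.sqrt (2 + Real.sqrt (2 + Real.sqrt 2))) := by
      rw [show 2 * (15 * π / 64) = π / 2 - π / 32 by ring, Real.cos_pi_div_two_sub,
        Real.sin_pi_div_thirty_two]
      ring
    rw [← hcos, ← Real.sqrt_sq (mul_nonneg zero_le_two hpos), Real.cos_two_mul, Real.cos_sq']
    congr 1
    ring
  refine ⟨h1, h2, ?_⟩
  rw [mul_div_cancel_left₀ _ (two_ne_zero' ℝ), h1, h2]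
end

section
/- Viète's proposed correction of Romanus' second example is also erroneous: 2·T_{45}(sin(π/192)) ≠ √(2 − √(2 − √(2 + √(2 + √(2 + √2))))). -/
/-!
Both sides are sines of explicit angles. Since `sin (π/192) = cos (95π/192)`, the left side is
`2 cos (45 · 95π/192)`, and `45 · 95 = 11 · 384 + 51`, so it equals
`2 cos (51π/192) = 2 sin (30π/128)`. By the half-angle formulas the inner radical
`√(2 - √(2 + √(2 + √(2 + √2))))` is `2 sin (π/64) = 2 cos (62π/128)`, so the right side is
`2 sin (31π/128)`. The sine is strictly increasing on `[-π/2, π/2]`, so the left side is strictly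
smaller.
-/

open Real Polynomial

lemma chebyshev_forty_five_eval :
    (Polynomial.Chebyshev.T ℝ 45).eval (Real.sin (π / 192)) = Real.sin (30 * π / 128) := by
  rw [← Real.cos_pi_div_two_sub (π / 192), Polynomial.Chebyshev.T_real_cos,
    ← Real.cos_pi_div_two_sub (30 * π / 128), 
    ← Real.cos_add_nat_mul_two_pi (π / 2 - 30 * π / 128) 11]
  congr 1
  push_cast
  ring

lemma nested_radical_eq :
    Real.sqrt (2 - Real.sqrt (2 - Real.sqrt (2 + Real.sqrt (2 + Real.sqrt (2 + Real.sqrt 2))))) =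
      2 * Real.sin (31 * π / 128) := by
  have inner : Real.sqrt (2 - Real.sqrt (2 + Real.sqrt (2 + Real.sqrt (2 + Real.sqrt 2)))) =
      2 * Real.sin (π / 64) := by
    have h := Real.sin_pi_over_two_pow_succ 4
    norm_num [Real.sqrtTwoAddSeries] at h
    linarith
  have half_angle : Real.sin (π / 64) = 1 - 2 * Real.sin (31 * π / 128) ^ 2 := by
    have h := Real.cos_two_mul (31 * π / 128)
    have e : 2 * (31 * π / 128) = π / 2 - π / 64 := by ring
    rw [e, Real.cos_pi_div_two_sub] at h
    linarith [Real.sin_sq_add_cos_sq (31 * π / 128)]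
  have nonneg : 0 ≤ Real.sin (31 * π / 128) :=
    Real.sin_nonneg_of_nonneg_of_le_pi (by positivity) (by linarith [Real.pi_pos])
  rw [inner, half_angle, ← Real.sqrt_sq (mul_nonneg zero_le_two nonneg)]
  congr 1
  ring

theorem viete_correction_error :
    2 * (Polynomial.Chebyshev.T ℝ 45).eval (Real.sin (π / 192)) ≠
      Real.sqrt (2 - Real.sqrt (2 - Real.sqrt (2 + Real.sqrt (2 + Real.sqrt (2 + Real.sqrt 2))))) := by
  rw [chebyshev_forty_five_eval, nested_radical_eq]
  have h : Real.sin (30 * π / 128) < Real.sin (31 * π / 128) :=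
    Real.sin_lt_sin_of_lt_of_le_pi_div_two (by linarith [Real.pi_pos]) (by linarith [Real.pi_pos])
      (by linarith [Real.pi_pos])
  exact ne_of_lt (by linarith)
end

section
/- The numbers A = 2·sin(π/120), B = 2·sin(π/24), C = 2·sin(π/8), D = 2·cos(π/8), E = 2·sin(π/600) satisfy the system of the 1639 Louvain new year's gift: B = 5A − 5A³ + A⁵; C = 3B − B³; D = 9B − 30B³ + 27B⁵ − 9B⁷ + B⁹; C² + D² = 4; and A = 5E − 5E³ + E⁵. Moreover B = √(2 − √(2 + √3)), C = √(2 − √2) and D = √(2 + √2). -/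
/-!
The chord function `x ↦ 2 sin x` turns multiplication of the angle by `3` and `5` into the
polynomials `t ↦ 3t - t³` and `t ↦ 5t - 5t³ + t⁵`. The angles `π/600`, `π/120`, `π/24` are linked
by factors of `5`, and `π/24`, `π/8`, `3π/8` by factors of `3`; since `cos (π/8) = sin (3π/8)`, the
degree-nine equation is the cubic one composed with itself. The radical for `B` comes from halving
the angle `π/6` twice.
-/

open Real

lemma chord_three_mul (x : ℝ) :
    2 * Real.sin (3 * x) = 3 * (2 * Real.sin x) - (2 * Real.sin x) ^ 3 := by
  rw [Real.sin_three_mul]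
  ring

lemma chord_five_mul (x : ℝ) :
    2 * Real.sin (5 * x) =
      5 * (2 * Real.sin x) - 5 * (2 * Real.sin x) ^ 3 + (2 * Real.sin x) ^ 5 := by
  have h : Real.sin (5 * x) = Real.sin (3 * x + 2 * x) := by ring_nf
  rw [h, Real.sin_add, Real.sin_three_mul, Real.cos_three_mul, Real.sin_two_mul,
    Real.cos_two_mul]
  have hc4 : Real.cos x ^ 4 = (1 - Real.sin x ^ 2) ^ 2 := by
    rw [← Real.cos_sq']
    ring
  linear_combination 16 * Real.sin x * hc4 - 16 * Real.sin x ^ 3 * Real.cos_sq' x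

lemma two_mul_cos_pi_div_twelve : 2 * Real.cos (π / 12) = √(2 + √3) := by
  have hpos : 0 ≤ Real.cos (π / 12) :=
    Real.cos_nonneg_of_mem_Icc ⟨by linarith [Real.pi_pos], by linarith [Real.pi_pos]⟩
  have hdouble := Real.cos_two_mul (π / 12)
  rw [show 2 * (π / 12) = π / 6 by ring, Real.cos_pi_div_six] at hdouble
  refine (Real.sqrt_eq_iff_mul_self_eq (by positivity) (by positivity)).2 ?_ |>.symm
  linear_combination 2 * hdouble

lemma two_mul_sin_pi_div_twenty_four : 2 * Real.sin (π / 24) = √(2 - √(2 + √3)) := by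
  have hpos : 0 ≤ Real.sin (π / 24) :=
    Real.sin_nonneg_of_nonneg_of_le_pi (by positivity) (by linarith [Real.pi_pos])
  have hdouble := Real.cos_two_mul (π / 24)
  rw [show 2 * (π / 24) = π / 12 by ring, Real.cos_sq'] at hdouble
  rw [← two_mul_cos_pi_div_twelve, hdouble,
    show 2 - 2 * (2 * (1 - Real.sin (π / 24) ^ 2) - 1) = (2 * Real.sin (π / 24)) ^ 2 by ring,
    Real.sqrt_sq (by positivity)]

theorem new_years_gift_1639 :
    let A : ℝ := 2 * Real.sin (π / 120)
    let B : ℝ := 2 * Real.sin (π / 24)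
    let C : ℝ := 2 * Real.sin (π / 8)
    let D : ℝ := 2 * Real.cos (π / 8)
    let E : ℝ := 2 * Real.sin (π / 600)
    B = 5 * A - 5 * A ^ 3 + A ^ 5 ∧
    C = 3 * B - B ^ 3 ∧
    D = 9 * B - 30 * B ^ 3 + 27 * B ^ 5 - 9 * B ^ 7 + B ^ 9 ∧
    C ^ 2 + D ^ 2 = 4 ∧
    A = 5 * E - 5 * E ^ 3 + E ^ 5 ∧
    B = Real.sqrt (2 - Real.sqrt (2 + Real.sqrt 3)) ∧
    C = Real.sqrt (2 - Real.sqrt 2) ∧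
    D = Real.sqrt (2 + Real.sqrt 2) := by
  intro A B C D E
  have hC : C = 3 * B - B ^ 3 := by
    have h := chord_three_mul (π / 24)
    rwa [show 3 * (π / 24) = π / 8 by ring] at h
  have hD : D = 3 * C - C ^ 3 := by
    have h := chord_three_mul (π / 8)
    rwa [show 3 * (π / 8) = π / 2 - π / 8 by ring, Real.sin_pi_div_two_sub] at h
  refine ⟨?_, hC, ?_, ?_, ?_, two_mul_sin_pi_div_twenty_four, ?_, ?_⟩
  · have h := chord_five_mul (π / 120)
    rwa [show 5 * (π / 120) = π / 24 by ring] at h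
  · rw [hD, hC]
    ring
  · linear_combination 4 * Real.sin_sq_add_cos_sq (π / 8)
  · have h := chord_five_mul (π / 600)
    rwa [show 5 * (π / 600) = π / 120 by ring] at h
  · simp only [C, Real.sin_pi_div_eight]
    ring
  · simp only [D, Real.cos_pi_div_eight]
    ring
end
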